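/- Let q > 0 and let p > 2 be real. Then the functions y ↦ y^{−3}(y^p S_p(y)/Γ(p) − 1) and y ↦ y^{−3}(y^{p+1} S_{p+1}(y)/Γ(p+1) − 1) are both integrable on (0, ∞), and (p−1)(p−2) ∫_0^∞ y^{−3}(y^p S_p(y)/Γ(p) − 1) dy = p(p−1) ∫_0^∞ y^{−3}(y^{p+1} S_{p+1}(y)/Γ(p+1) − 1) dy; that is, the dimension moment M_1(p) of the cusp satisfies the recursion M_1(p) = M_1(p+1). -/

import Mathlib

open MeasureTheory

/-- `S_p(y) = ∑_{n≥0} (n+q)^{p-1} e^{-(n+q)y}`. -/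
noncomputable def cuspS (q p y : ℝ) : ℝ :=
  ∑' n : ℕ, ((n : ℝ) + q) ^ (p - 1) * Real.exp (-(((n : ℝ) + q) * y))

open Filter Topology Set

/-- The error term `S_p(y) - Γ(p) y^{-p}`. -/
noncomputable def cuspE (q p y : ℝ) : ℝ := cuspS q p y - Real.Gamma p * y ^ (-p)

lemma cusp_summ (q p y : ℝ) (hy : 0 < y) :
    Summable (fun n : ℕ => ((n : ℝ) + q) ^ (p - 1) * Real.exp (-(((n : ℝ) + q) * y))) := by
  have h1 : Summable (fun n : ℕ => Real.exp (-(y / 2) * n)) := by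
    simpa using Real.summable_pow_mul_exp_neg_nat_mul 0 (half_pos hy)
  refine summable_of_isBigO_nat (h1.mul_left (Real.exp (-(q * (y / 2))))) ?_
  have ht : Tendsto (fun n : ℕ => (n : ℝ) + q) atTop atTop :=
    tendsto_atTop_add_const_right _ _ tendsto_natCast_atTop_atTop
  have h2 := ((isLittleO_rpow_exp_pos_mul_atTop (p - 1) (half_pos hy)).comp_tendsto ht).isBigO
  have h3 := h2.mul (Asymptotics.isBigO_refl
    (fun n : ℕ => Real.exp (-(((n : ℝ) + q) * y))) atTop)
  refine h3.congr (fun n => rfl) (fun n => ?_)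
  simp only [Function.comp]
  rw [← Real.exp_add, ← Real.exp_add]
  congr 1
  ring

lemma cusp_deriv (q p y : ℝ) (hq : 0 < q) (hy : 0 < y) :
    HasDerivAt (cuspS q p) (-cuspS q (p + 1) y) y := by
  have key := hasDerivAt_tsum_of_isPreconnected
    (u := fun n : ℕ => ((n : ℝ) + q) ^ (p + 1 - 1) * Real.exp (-(((n : ℝ) + q) * (y / 2))))
    (g := fun (n : ℕ) (z : ℝ) => ((n : ℝ) + q) ^ (p - 1) * Real.exp (-(((n : ℝ) + q) * z)))
    (g' := fun (n : ℕ) (z : ℝ) =>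
      -(((n : ℝ) + q) ^ (p + 1 - 1) * Real.exp (-(((n : ℝ) + q) * z))))
    (t := Ioi (y / 2)) (y₀ := y) (y := y)
    (cusp_summ q (p + 1) (y / 2) (half_pos hy)) isOpen_Ioi isPreconnected_Ioi ?_ ?_
    (by simp [hy]) (cusp_summ q p y hy) (by simp [hy])
  · rw [tsum_neg] at key
    exact key
  · intro n z hz
    have hn : 0 < (n : ℝ) + q := by positivity
    have h1 : HasDerivAt (fun z : ℝ => -(((n : ℝ) + q) * z)) (-((n : ℝ) + q)) z := by
      simpa using ((hasDerivAt_id' z).const_mul ((n : ℝ) + q)).fun_neg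
    have h2 := (h1.exp).const_mul (((n : ℝ) + q) ^ (p - 1))
    refine h2.congr_deriv ?_
    have : ((n : ℝ) + q) ^ (p + 1 - 1) = ((n : ℝ) + q) ^ (p - 1) * ((n : ℝ) + q) := by
      rw [← Real.rpow_add_one hn.ne']; congr 1; ring
    rw [this]; ring
  · intro n z hz
    have hn : 0 < (n : ℝ) + q := by positivity
    have hz' : y / 2 < z := hz
    rw [norm_neg, Real.norm_of_nonneg (by positivity)]
    gcongr

lemma cusp_nonneg (q p y : ℝ) (hq : 0 < q) : 0 ≤ cuspS q p y := by
  unfold cuspS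
  refine tsum_nonneg fun n => ?_
  positivity

lemma cusp_decay (q p d y : ℝ) (hq : 0 < q) (hd : 0 < d) (hy : d ≤ y) :
    cuspS q p y ≤ Real.exp (-(q * (y - d))) * cuspS q p d := by
  unfold cuspS
  rw [← tsum_mul_left]
  refine (cusp_summ q p y (hd.trans_le hy)).tsum_le_tsum (fun n => ?_)
    ((cusp_summ q p d hd).mul_left _)
  have hn : 0 < (n : ℝ) + q := by positivity
  have : Real.exp (-(((n : ℝ) + q) * y)) ≤
      Real.exp (-(q * (y - d))) * Real.exp (-(((n : ℝ) + q) * d)) := by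
    rw [← Real.exp_add]
    apply Real.exp_le_exp.mpr
    have : 0 ≤ (n : ℝ) * (y - d) := mul_nonneg (by positivity) (by linarith)
    nlinarith
  calc _ ≤ ((n : ℝ) + q) ^ (p - 1) *
        (Real.exp (-(q * (y - d))) * Real.exp (-(((n : ℝ) + q) * d))) := by gcongr
    _ = _ := by ring

lemma rpow_le_const_exp (q p y : ℝ) (hq : 0 < q) (hp : 0 < p) (hy : 0 < y) :
    y ^ p ≤ (p / q) ^ p * Real.exp (q * y) := by
  have h1 : q * y / p ≤ Real.exp (q * y / p) := by
    linarith [Real.add_one_le_exp (q * y / p)]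
  have h2 : (q * y / p) ^ p ≤ Real.exp (q * y) := by
    calc (q * y / p) ^ p ≤ (Real.exp (q * y / p)) ^ p := by gcongr
      _ = Real.exp (q * y) := by
        rw [← Real.exp_mul]; congr 1; field_simp
  have h3 : y ^ p = (p / q) ^ p * (q * y / p) ^ p := by
    rw [← Real.mul_rpow (by positivity) (by positivity)]
    congr 1; field_simp
  rw [h3]; gcongr

lemma cuspE_decay (q p d : ℝ) (hq : 0 < q) (hp : 0 < p) (hd : 0 < d) :
    ∃ C, 0 ≤ C ∧ ∀ y, d ≤ y → |cuspE q p y| ≤ C * y ^ (-p) := by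
  have hG : 0 < Real.Gamma p := Real.Gamma_pos_of_pos hp
  have hS := cusp_nonneg q p d hq
  refine ⟨(p / q) ^ p * Real.exp (q * d) * cuspS q p d + Real.Gamma p, by positivity, ?_⟩
  intro y hy
  have hy0 : 0 < y := hd.trans_le hy
  have h1 := cusp_decay q p d y hq hd hy
  have h2 := rpow_le_const_exp q p y hq hp hy0
  have hyp : 0 < y ^ (-p) := by positivity
  have h3 : 1 = y ^ p * y ^ (-p) := by
    rw [← Real.rpow_add hy0]; simp
  have h4 : cuspS q p y ≤ (p / q) ^ p * Real.exp (q * d) * cuspS q p d * y ^ (-p) := by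
    calc cuspS q p y ≤ Real.exp (-(q * (y - d))) * cuspS q p d * (y ^ p * y ^ (-p)) := by
          rw [← h3]; linarith
      _ ≤ Real.exp (-(q * (y - d))) * cuspS q p d *
          (((p / q) ^ p * Real.exp (q * y)) * y ^ (-p)) := by gcongr
      _ = (p / q) ^ p * (Real.exp (-(q * (y - d))) * Real.exp (q * y)) * cuspS q p d
          * y ^ (-p) := by ring
      _ = _ := by
        rw [← Real.exp_add]; congr 4; ring
  have h5 := cusp_nonneg q p y hq
  unfold cuspE
  rw [abs_le]
  constructor <;> nlinarith [mul_pos hG hyp]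

lemma cuspE_deriv (q p y : ℝ) (hq : 0 < q) (hp : 0 < p) (hy : 0 < y) :
    HasDerivAt (cuspE q p) (-cuspE q (p + 1) y) y := by
  have h1 := cusp_deriv q p y hq hy
  have h2 := (Real.hasDerivAt_rpow_const (x := y) (p := -p) (Or.inl hy.ne')).const_mul
    (Real.Gamma p)
  have h3 := h1.sub h2
  refine h3.congr_deriv ?_
  unfold cuspE
  rw [Real.Gamma_add_one hp.ne']
  have : -p - 1 = -(p + 1) := by ring
  rw [this]; ring

lemma cusp_one (q y : ℝ) (hy : 0 < y) :
    cuspS q 1 y = Real.exp (-(q * y)) / (1 - Real.exp (-y)) := by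
  unfold cuspS
  have h : ∀ n : ℕ, ((n : ℝ) + q) ^ ((1 : ℝ) - 1) * Real.exp (-(((n : ℝ) + q) * y)) =
      Real.exp (-(q * y)) * (Real.exp (-y)) ^ n := by
    intro n
    rw [← Real.exp_nat_mul, ← Real.exp_add]
    simp only [sub_self, Real.rpow_zero, one_mul]
    congr 1; ring
  simp_rw [h]
  rw [tsum_mul_left, tsum_geometric_of_lt_one (Real.exp_pos _).le (by simpa using hy)]
  rfl

lemma exists_analytic (q : ℝ) :
    ∃ h : ℝ → ℝ, AnalyticAt ℝ h 0 ∧ ∀ y, 0 < y → cuspE q 1 y = h y := by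
  have hds : ∀ f : ℝ → ℝ, AnalyticAt ℝ f 0 → AnalyticAt ℝ (dslope f 0) 0 := by
    rintro f ⟨P, hP⟩
    exact ⟨_, hP.has_fpower_series_dslope_fslope⟩
  set f : ℝ → ℝ := fun y => 1 - Real.exp (-y) with hf
  have hfa : AnalyticAt ℝ f 0 := by rw [hf]; fun_prop
  set u := dslope f 0 with hu
  have hua : AnalyticAt ℝ u 0 := hds f hfa
  set g : ℝ → ℝ := fun y => Real.exp (-(q * y)) - u y with hg
  have hga : AnalyticAt ℝ g 0 := by
    have : AnalyticAt ℝ (fun y : ℝ => Real.exp (-(q * y))) 0 := by fun_prop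
    exact this.sub hua
  have hfd : HasDerivAt f 1 0 := by
    have := ((hasDerivAt_neg (0 : ℝ)).exp).const_sub 1
    simpa using this
  have hu0 : u 0 = 1 := by rw [hu, dslope_same, hfd.deriv]
  have hg0 : g 0 = 0 := by simp [hg, hu0]
  refine ⟨fun y => dslope g 0 y / u y, (hds g hga).div hua (by simp [hu0]), ?_⟩
  intro y hy
  have hfy : 0 < 1 - Real.exp (-y) := by simpa using hy
  have huy : u y = (1 - Real.exp (-y)) / y := by
    rw [hu, dslope_of_ne _ hy.ne', slope_def_field]; simp [hf]
  have hgy : dslope g 0 y = (Real.exp (-(q * y)) - (1 - Real.exp (-y)) / y) / y := by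
    rw [dslope_of_ne _ hy.ne', slope_def_field, hg0, ← huy]; simp [hg]
  unfold cuspE
  show _ = dslope g 0 y / u y
  rw [cusp_one q y hy, hgy, huy, Real.Gamma_one, Real.rpow_neg_one]
  field_simp

lemma cuspE_bdd_nat (q : ℝ) (hq : 0 < q) (k : ℕ) :
    ∃ C, 0 ≤ C ∧ ∀ y, 0 < y → |cuspE q ((k : ℝ) + 1) y| ≤ C := by
  obtain ⟨h, ha, hE⟩ := exists_analytic q
  have hind : ∀ k : ℕ, ∀ y, 0 < y →
      cuspE q ((k : ℝ) + 1) y = (-1) ^ k * (deriv^[k] h) y := by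
    intro k
    induction k with
    | zero => intro y hy; simpa using hE y hy
    | succ k ih =>
      intro y hy
      have h1 := cuspE_deriv q ((k : ℝ) + 1) y hq (by positivity) hy
      have h2 : (fun z => (-1 : ℝ) ^ k * (deriv^[k] h) z) =ᶠ[𝓝 y] cuspE q ((k : ℝ) + 1) := by
        filter_upwards [Ioi_mem_nhds hy] with z hz
        exact (ih z hz).symm
      have h3 := (h1.congr_of_eventuallyEq h2).deriv
      rw [deriv_const_mul_field] at h3
      rw [Function.iterate_succ_apply', pow_succ]
      push_cast
      linarith
  have hc := (ha.iterated_deriv k).continuousAt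
  obtain ⟨M, hM⟩ : ∃ M, ∀ᶠ y in 𝓝 (0 : ℝ), |(deriv^[k] h) y| ≤ M :=
    ⟨|(deriv^[k] h) 0| + 1, (hc.abs.eventually_lt_const (lt_add_one _)).mono fun _ => le_of_lt⟩
  obtain ⟨d, hd, hdM⟩ := Metric.eventually_nhds_iff.mp hM
  obtain ⟨C, hC, hCd⟩ := cuspE_decay q ((k : ℝ) + 1) d hq (by positivity) hd
  refine ⟨max M (C * d ^ (-((k : ℝ) + 1))), le_max_of_le_right (by positivity), ?_⟩
  intro y hy
  rcases lt_or_ge y d with hyd | hyd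
  · refine le_max_of_le_left ?_
    rw [hind k y hy, abs_mul]
    simp only [abs_pow, abs_neg, abs_one, one_pow, one_mul]
    exact hdM (by simpa [abs_of_pos hy] using hyd)
  · refine le_max_of_le_right ((hCd y hyd).trans ?_)
    gcongr ?_ * ?_
    exact Real.rpow_le_rpow_of_nonpos hd hyd (by linarith [(Nat.cast_nonneg k : (0:ℝ) ≤ k)])

lemma frac_int {X : Type*} [MeasurableSpace X] (ν : Measure X) [SFinite ν] (g : X → ℝ)
    (hgm : Measurable g) (hg : ∀ᵐ x ∂ν, 0 < g x) (p r y : ℝ) (hs : 0 < r - p)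
    (hint : Integrable (fun x => g x ^ (p - 1) * Real.exp (-(g x * y))) ν) :
    IntegrableOn (fun t : ℝ => t ^ (r - p - 1) *
      ∫ x, g x ^ (r - 1) * Real.exp (-(g x * (y + t))) ∂ν) (Ioi 0) ∧
    ∫ t in Ioi (0 : ℝ), t ^ (r - p - 1) *
      ∫ x, g x ^ (r - 1) * Real.exp (-(g x * (y + t))) ∂ν
      = Real.Gamma (r - p) * ∫ x, g x ^ (p - 1) * Real.exp (-(g x * y)) ∂ν := by
  set F : X → ℝ → ℝ := fun x t =>
    t ^ (r - p - 1) * (g x ^ (r - 1) * Real.exp (-(g x * (y + t)))) with hF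
  have hFm : AEStronglyMeasurable (Function.uncurry F)
      (ν.prod (volume.restrict (Ioi (0 : ℝ)))) := by
    apply Measurable.aestronglyMeasurable
    simp only [hF, Function.uncurry_def]
    fun_prop
  have hFe : ∀ x t, F x t = g x ^ (r - 1) * Real.exp (-(g x * y)) *
      (t ^ (r - p - 1) * Real.exp (-(g x * t))) := by
    intro x t
    simp only [hF]
    rw [mul_add, neg_add, Real.exp_add]; ring
  have hval : ∀ x, 0 < g x → ∫ t in Ioi (0 : ℝ), F x t =
      Real.Gamma (r - p) * (g x ^ (p - 1) * Real.exp (-(g x * y))) := by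
    intro x hx
    simp_rw [hFe]
    rw [integral_const_mul, Real.integral_rpow_mul_exp_neg_mul_Ioi hs hx, one_div,
      Real.inv_rpow hx.le, ← Real.rpow_neg hx.le]
    have : g x ^ (p - 1) = g x ^ (r - 1) * g x ^ (-(r - p)) := by
      rw [← Real.rpow_add hx]; congr 1; ring
    rw [this]; ring
  have hFi : Integrable (Function.uncurry F) (ν.prod (volume.restrict (Ioi (0 : ℝ)))) := by
    rw [integrable_prod_iff hFm]
    constructor
    · filter_upwards [hg] with x hx
      simp only [Function.uncurry_apply_pair]
      simp_rw [hFe]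
      refine Integrable.const_mul ?_ _
      have := integrableOn_rpow_mul_exp_neg_mul_rpow (p := 1) (s := r - p - 1) (b := g x)
        (by linarith) one_pos hx
      simpa [IntegrableOn] using this
    · refine (hint.const_mul (Real.Gamma (r - p))).congr ?_
      filter_upwards [hg] with x hx
      rw [← hval x hx]
      refine setIntegral_congr_fun measurableSet_Ioi fun t ht => ?_
      have ht' : (0 : ℝ) < t := ht
      simp only [Function.uncurry_apply_pair, hF]
      rw [Real.norm_of_nonneg (by positivity)]
  have h1 : ∀ t : ℝ, t ^ (r - p - 1) * ∫ x, g x ^ (r - 1) * Real.exp (-(g x * (y + t))) ∂ν =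
      ∫ x, F x t ∂ν := fun t => (integral_const_mul _ _).symm
  simp_rw [h1]
  constructor
  · exact hFi.integral_prod_right
  · rw [← integral_integral_swap hFi, ← integral_const_mul]
    refine integral_congr_ae ?_
    filter_upwards [hg] with x hx
    exact hval x hx

lemma frac_sum (q p r y : ℝ) (hq : 0 < q) (hy : 0 < y) (hs : 0 < r - p) :
    IntegrableOn (fun t : ℝ => t ^ (r - p - 1) * cuspS q r (y + t)) (Ioi 0) ∧
    ∫ t in Ioi (0 : ℝ), t ^ (r - p - 1) * cuspS q r (y + t)
      = Real.Gamma (r - p) * cuspS q p y := by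
  have hi : ∀ p y : ℝ, 0 < y → Integrable
      (fun n : ℕ => ((n : ℝ) + q) ^ (p - 1) * Real.exp (-(((n : ℝ) + q) * y)))
      Measure.count := by
    intro p y hy
    rw [integrable_count_iff]
    exact (cusp_summ q p y hy).norm
  have hS : ∀ p y : ℝ, 0 < y → ∫ n : ℕ, ((n : ℝ) + q) ^ (p - 1) *
      Real.exp (-(((n : ℝ) + q) * y)) ∂Measure.count = cuspS q p y := by
    intro p y hy
    rw [integral_countable (hi p y hy)]
    simp [cuspS]
  have h := frac_int (Measure.count : Measure ℕ) (fun n : ℕ => (n : ℝ) + q)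
    (measurable_of_countable _) (Eventually.of_forall fun n => by positivity) p r y hs (hi p y hy)
  rw [hS p y hy] at h
  have hc : ∀ t ∈ Ioi (0 : ℝ), t ^ (r - p - 1) * (∫ n : ℕ, ((n : ℝ) + q) ^ (r - 1) *
      Real.exp (-(((n : ℝ) + q) * (y + t))) ∂Measure.count) =
      t ^ (r - p - 1) * cuspS q r (y + t) := by
    intro t ht
    rw [hS r (y + t) (add_pos hy ht)]
  refine ⟨h.1.congr_fun hc measurableSet_Ioi, ?_⟩
  rw [← h.2]
  exact (setIntegral_congr_fun measurableSet_Ioi hc).symm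

lemma frac_pow (p r y : ℝ) (hp : 0 < p) (hy : 0 < y) (hs : 0 < r - p) :
    IntegrableOn (fun t : ℝ => t ^ (r - p - 1) * (Real.Gamma r * (y + t) ^ (-r))) (Ioi 0) ∧
    ∫ t in Ioi (0 : ℝ), t ^ (r - p - 1) * (Real.Gamma r * (y + t) ^ (-r))
      = Real.Gamma (r - p) * (Real.Gamma p * y ^ (-p)) := by
  have hS : ∀ p y : ℝ, 0 < p → 0 < y → ∫ x in Ioi (0 : ℝ), x ^ (p - 1) *
      Real.exp (-(x * y)) = Real.Gamma p * y ^ (-p) := by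
    intro p y hp hy
    simp_rw [mul_comm _ y]
    rw [Real.integral_rpow_mul_exp_neg_mul_Ioi hp hy, one_div,
      Real.inv_rpow hy.le, ← Real.rpow_neg hy.le, mul_comm]
  have hi : Integrable (fun x : ℝ => x ^ (p - 1) * Real.exp (-(x * y)))
      (volume.restrict (Ioi 0)) := by
    have := integrableOn_rpow_mul_exp_neg_mul_rpow (p := 1) (s := p - 1) (b := y)
        (by linarith) one_pos hy
    simpa [IntegrableOn, mul_comm y] using this
  have h := frac_int (volume.restrict (Ioi (0 : ℝ))) (fun x => x) measurable_id
    (ae_restrict_mem measurableSet_Ioi) p r y hs hi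
  rw [hS p y hp hy] at h
  have hc : ∀ t ∈ Ioi (0 : ℝ), t ^ (r - p - 1) * (∫ x in Ioi (0 : ℝ), x ^ (r - 1) *
      Real.exp (-(x * (y + t)))) =
      t ^ (r - p - 1) * (Real.Gamma r * (y + t) ^ (-r)) := by
    intro t ht
    rw [hS r (y + t) (by linarith) (add_pos hy ht)]
  refine ⟨h.1.congr_fun hc measurableSet_Ioi, ?_⟩
  rw [← h.2]
  exact (setIntegral_congr_fun measurableSet_Ioi hc).symm

lemma bound_int (a b : ℝ) (ha : -1 < a) (hb : b < -1) :
    IntegrableOn (fun t : ℝ => if t ≤ 1 then t ^ a else t ^ b) (Ioi 0) := by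
  rw [← Ioc_union_Ioi_eq_Ioi (zero_le_one' ℝ)]
  refine IntegrableOn.union ?_ ?_
  · have h : IntegrableOn (fun t : ℝ => t ^ a) (Ioc 0 1) := by
      rw [← intervalIntegrable_iff_integrableOn_Ioc_of_le zero_le_one]
      exact intervalIntegral.intervalIntegrable_rpow' ha
    refine h.congr_fun (fun t ht => ?_) measurableSet_Ioc
    simp [ht.2]
  · refine (integrableOn_Ioi_rpow_of_lt hb one_pos).congr_fun (fun t ht => ?_) measurableSet_Ioi
    have : ¬ t ≤ 1 := not_le.mpr ht
    simp [this]

lemma cuspE_bdd (q p : ℝ) (hq : 0 < q) (hp : 0 < p) :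
    ∃ C, 0 ≤ C ∧ ∀ y, 0 < y → |cuspE q p y| ≤ C := by
  obtain ⟨k, hk⟩ := exists_nat_gt p
  set r : ℝ := (k : ℝ) + 1 with hr
  have hs : 0 < r - p := by linarith
  have hr0 : 0 < r := by linarith
  obtain ⟨C1, hC1, h1⟩ := cuspE_bdd_nat q hq k
  obtain ⟨C2, hC2, h2⟩ := cuspE_decay q r 1 hq hr0 one_pos
  have hG : 0 < Real.Gamma (r - p) := Real.Gamma_pos_of_pos hs
  set C := max C1 C2 with hC
  have hbi := (bound_int (r - p - 1) (-p - 1) (by linarith) (by linarith)).const_mul C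
  set b : ℝ → ℝ := fun t => C * (if t ≤ 1 then t ^ (r - p - 1) else t ^ (-p - 1)) with hb
  refine ⟨|∫ t in Ioi (0 : ℝ), b t| / Real.Gamma (r - p), by positivity, ?_⟩
  intro y hy
  obtain ⟨i1, e1⟩ := frac_sum q p r y hq hy hs
  obtain ⟨i2, e2⟩ := frac_pow p r y hp hy hs
  have e3 : ∫ t in Ioi (0 : ℝ), t ^ (r - p - 1) * cuspE q r (y + t) =
      Real.Gamma (r - p) * cuspE q p y := by
    unfold cuspE
    rw [mul_sub, ← e1, ← e2, ← integral_sub i1 i2]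
    simp_rw [mul_sub]
  have e4 : ‖∫ t in Ioi (0 : ℝ), t ^ (r - p - 1) * cuspE q r (y + t)‖ ≤
      ∫ t in Ioi (0 : ℝ), b t := by
    refine norm_integral_le_of_norm_le hbi ?_
    filter_upwards [ae_restrict_mem measurableSet_Ioi] with t ht
    have ht0 : (0 : ℝ) < t := ht
    rw [norm_mul, Real.norm_of_nonneg (by positivity), Real.norm_eq_abs]
    simp only [hb]
    split_ifs with h
    · rw [mul_comm]
      gcongr
      exact (h1 _ (by linarith)).trans (le_max_left _ _)
    · push Not at h
      have : t ^ (-p - 1) = t ^ (r - p - 1) * t ^ (-r) := by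
        rw [← Real.rpow_add ht0]; congr 1; ring
      rw [this, mul_left_comm]
      gcongr
      refine (h2 _ (by linarith)).trans ?_
      have : (y + t) ^ (-r) ≤ t ^ (-r) :=
        Real.rpow_le_rpow_of_nonpos ht0 (by linarith) (by linarith)
      have hcc : C2 ≤ C := le_max_right _ _
      gcongr
  rw [e3, norm_mul, Real.norm_of_nonneg hG.le, Real.norm_eq_abs] at e4
  rw [le_div_iff₀ hG, mul_comm]
  exact e4.trans (le_abs_self _)

/-- Integrability of the moment integrand in terms of the error term. -/
lemma cuspE_integrable (q p : ℝ) (hq : 0 < q) (hp : 2 < p) :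
    IntegrableOn (fun y : ℝ => y ^ (p - 3) * cuspE q p y) (Ioi 0) := by
  have hp0 : 0 < p := by linarith
  obtain ⟨C1, hC1, h1⟩ := cuspE_bdd q p hq hp0
  obtain ⟨C2, hC2, h2⟩ := cuspE_decay q p 1 hq hp0 one_pos
  have hbi := (bound_int (p - 3) (-3) (by linarith) (by norm_num)).const_mul (max C1 C2)
  refine Integrable.mono' hbi ?_ ?_
  · refine ContinuousOn.aestronglyMeasurable (fun y hy => ?_) measurableSet_Ioi
    have hy0 : (0 : ℝ) < y := hy
    exact ((Real.continuousAt_rpow_const _ _ (Or.inl hy0.ne')).mul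
      (cuspE_deriv q p y hq hp0 hy0).continuousAt).continuousWithinAt
  · filter_upwards [ae_restrict_mem measurableSet_Ioi] with y hy
    have hy0 : (0 : ℝ) < y := hy
    rw [norm_mul, Real.norm_of_nonneg (by positivity), Real.norm_eq_abs]
    split_ifs with h
    · rw [mul_comm]
      gcongr
      exact (h1 y hy0).trans (le_max_left _ _)
    · push Not at h
      have : y ^ (-3 : ℝ) = y ^ (p - 3) * y ^ (-p) := by
        rw [← Real.rpow_add hy0]; congr 1; ring
      rw [this, mul_left_comm]
      gcongr
      refine (h2 y h.le).trans ?_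
      gcongr
      exact le_max_right _ _

lemma integrand_eq (q p y : ℝ) (hp : 0 < p) (hy : 0 < y) :
    y ^ (-(3 : ℝ)) * (y ^ p * cuspS q p y / Real.Gamma p - 1) =
      (Real.Gamma p)⁻¹ * (y ^ (p - 3) * cuspE q p y) := by
  have hG : Real.Gamma p ≠ 0 := (Real.Gamma_pos_of_pos hp).ne'
  unfold cuspE
  have h1 : y ^ (p - 3) = y ^ (-(3 : ℝ)) * y ^ p := by
    rw [← Real.rpow_add hy]; congr 1; ring
  have h2 : y ^ (-p) = (y ^ p)⁻¹ := Real.rpow_neg hy.le p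
  have h3 : y ^ p ≠ 0 := (Real.rpow_pos_of_pos hy p).ne'
  rw [h1, h2]
  field_simp

lemma by_parts (q p : ℝ) (hq : 0 < q) (hp : 2 < p) :
    (p - 2) * ∫ y in Ioi (0 : ℝ), y ^ (p - 3) * cuspE q p y =
      ∫ y in Ioi (0 : ℝ), y ^ (p + 1 - 3) * cuspE q (p + 1) y := by
  have hp0 : 0 < p := by linarith
  obtain ⟨C1, hC1, h1⟩ := cuspE_bdd q p hq hp0
  obtain ⟨C2, hC2, h2⟩ := cuspE_decay q p 1 hq hp0 one_pos
  have i1 := (cuspE_integrable q p hq hp).const_mul (p - 2)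
  have i2 := cuspE_integrable q (p + 1) hq (by linarith)
  have key := integral_Ioi_of_hasDerivAt_of_tendsto (a := 0) (m := 0)
    (f := fun y : ℝ => y ^ (p - 2) * cuspE q p y)
    (f' := fun y : ℝ => (p - 2) * (y ^ (p - 3) * cuspE q p y) -
      y ^ (p + 1 - 3) * cuspE q (p + 1) y) ?_ ?_ (i1.sub i2) ?_
  · rw [integral_sub i1 i2, integral_const_mul, Real.zero_rpow (by linarith)] at key
    linarith
  · have h0 : Tendsto (fun y : ℝ => C1 * y ^ (p - 2)) (𝓝[Ici 0] 0) (𝓝 0) := by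
      have : ContinuousAt (fun y : ℝ => C1 * y ^ (p - 2)) 0 :=
        (Real.continuousAt_rpow_const _ _ (Or.inr (by linarith))).const_mul C1
      have h := this.tendsto
      rw [Real.zero_rpow (by linarith), mul_zero] at h
      exact h.mono_left nhdsWithin_le_nhds
    unfold ContinuousWithinAt
    beta_reduce
    rw [Real.zero_rpow (by linarith), zero_mul]
    refine squeeze_zero_norm' ?_ h0
    filter_upwards [self_mem_nhdsWithin] with y hy
    rcases (show (0 : ℝ) ≤ y from hy).eq_or_lt with rfl | hy0
    · simp [Real.zero_rpow (show p - 2 ≠ 0 by linarith)]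
    · rw [norm_mul, Real.norm_of_nonneg (by positivity), Real.norm_eq_abs, mul_comm]
      gcongr
      exact h1 y hy0
  · intro y hy
    have hy0 : (0 : ℝ) < y := hy
    have d1 := Real.hasDerivAt_rpow_const (x := y) (p := p - 2) (Or.inl hy0.ne')
    have d2 := d1.mul (cuspE_deriv q p y hq hp0 hy0)
    refine d2.congr_deriv ?_
    have e1 : p - 2 - 1 = p - 3 := by ring
    have e2 : p + 1 - 3 = p - 2 := by ring
    rw [e1, e2]; ring
  · have h0 : Tendsto (fun y : ℝ => C2 * y ^ (-(2 : ℝ))) atTop (𝓝 0) := by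
      simpa using (tendsto_rpow_neg_atTop (two_pos : (0 : ℝ) < 2)).const_mul C2
    refine squeeze_zero_norm' ?_ h0
    filter_upwards [eventually_ge_atTop 1] with y hy
    have hy0 : (0 : ℝ) < y := by linarith
    rw [norm_mul, Real.norm_of_nonneg (by positivity), Real.norm_eq_abs]
    have : y ^ (-2 : ℝ) = y ^ (p - 2) * y ^ (-p) := by
      rw [← Real.rpow_add hy0]; congr 1; ring
    rw [this, mul_left_comm]
    gcongr
    exact h2 y hy

/-- Recursion for the dimension moment of the cusp: `M₁(p) = M₁(p+1)` where
`M₁(p) = (p-2)(p-1) ∫₀^∞ y^{-3} (yᵖ S_p(y)/Γ(p) - 1) dy`. -/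
theorem dimension_moment_recursion (q p : ℝ) (hq : 0 < q) (hp : 2 < p) :
    IntegrableOn (fun y : ℝ => y ^ (-(3 : ℝ)) * (y ^ p * cuspS q p y / Real.Gamma p - 1))
      (Set.Ioi 0) ∧
    IntegrableOn (fun y : ℝ =>
        y ^ (-(3 : ℝ)) * (y ^ (p + 1) * cuspS q (p + 1) y / Real.Gamma (p + 1) - 1))
      (Set.Ioi 0) ∧
    (p - 1) * (p - 2) *
        ∫ y in Set.Ioi (0 : ℝ), y ^ (-(3 : ℝ)) * (y ^ p * cuspS q p y / Real.Gamma p - 1)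
      = p * (p - 1) *
        ∫ y in Set.Ioi (0 : ℝ),
          y ^ (-(3 : ℝ)) * (y ^ (p + 1) * cuspS q (p + 1) y / Real.Gamma (p + 1) - 1) := by
  have hp0 : 0 < p := by linarith
  have c1 : ∀ r : ℝ, 0 < r → ∀ y ∈ Ioi (0 : ℝ), (Real.Gamma r)⁻¹ * (y ^ (r - 3) * cuspE q r y) =
      y ^ (-(3 : ℝ)) * (y ^ r * cuspS q r y / Real.Gamma r - 1) :=
    fun r hr y hy => (integrand_eq q r y hr hy).symm
  refine ⟨?_, ?_, ?_⟩
  · exact IntegrableOn.congr_fun ((cuspE_integrable q p hq hp).const_mul (Real.Gamma p)⁻¹)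
      (c1 p hp0) measurableSet_Ioi
  · exact IntegrableOn.congr_fun ((cuspE_integrable q (p + 1) hq (by linarith)).const_mul
      (Real.Gamma (p + 1))⁻¹) (c1 (p + 1) (by linarith)) measurableSet_Ioi
  · rw [← setIntegral_congr_fun measurableSet_Ioi (c1 p hp0),
      ← setIntegral_congr_fun measurableSet_Ioi (c1 (p + 1) (by linarith)),
      integral_const_mul, integral_const_mul, ← by_parts q p hq hp, Real.Gamma_add_one hp0.ne']
    have hG : Real.Gamma p ≠ 0 := (Real.Gamma_pos_of_pos hp0).ne'
    field_simp
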